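/- We have ∑_{n=0}^∞ 1 / (binom(2n, n) · (2n+1)²) = 4 · Im( Li_{1,1}(−1/√3, i) − Li_{1,1}(1/√3, −i) ) − π · log(2 + √3) + 4G, where Li_{1,1}(x, y) = ∑_{m > n ≥ 1} x^m y^n / (m n) and G = ∑_{k=0}^∞ (−1)^k/(2k+1)² is Catalan's constant. -/

import Mathlib

open Real Complex

/-- The double polylogarithm `Li_{1,1}(x,y) = ∑_{m > n ≥ 1} x^m y^n / (m n)`. -/
noncomputable def Li11 (x y : ℂ) : ℂ :=
  ∑' p : {p : ℕ × ℕ // p.2 < p.1 ∧ 1 ≤ p.2},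
    x ^ p.1.1 * y ^ p.1.2 / ((p.1.1 : ℂ) * (p.1.2 : ℂ))

/-! The series on the left is twice the integral over `[0, 1/2]` against `dx / x` of
`∑ 4ⁿ x²ⁿ⁺¹ / (binom(2n, n) (2n+1)) = arcsin x / √(1 - x²)`, which the substitution
`x = 2t / (1 + t²)` turns into a value of `Ti₂(t) = ∫ arctan t / t dt`. On the right, the imaginary
part of `Li_{1,1}(-r, i) - Li_{1,1}(r, -i)` has derivative `2 arctan r / (1 - r²)`; the substitution
`t = (1 - r) / (1 + r)`, under which `arctan t = π/4 - arctan r`, turns its integral into the same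
`Ti₂(t)`, up to a logarithm and `Ti₂(1) = G`. Comparing the two gives an identity in `r`, whose
case `r = 1 / √3`, where `x = 1 / 2`, is the theorem. -/

theorem one_sub_sq_pos {x : ℝ} (hx : |x| < 1) : 0 < 1 - x ^ 2 :=
  sub_pos.mpr ((sq_lt_one_iff_abs_lt_one x).mpr hx)

open Set in
theorem sub_eq_sub_of_hasDerivAt_eq {E : Type*} [NormedAddCommGroup E] [NormedSpace ℝ E]
    [CompleteSpace E] {f g f' : ℝ → E} {a b : ℝ} (hf : ContinuousOn f (uIcc a b))
    (hg : ContinuousOn g (uIcc a b)) (hf' : ∀ x ∈ uIoo a b, HasDerivAt f (f' x) x)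
    (hg' : ∀ x ∈ uIoo a b, HasDerivAt g (f' x) x) : f b - f a = g b - g a := by
  have h := MeasureTheory.integral_eq_of_hasDerivAt_off_countable (f - g) (fun _ ↦ 0)
    countable_empty (hf.sub hg)
    (fun x hx ↦ ((hf' x hx.1).sub (hg' x hx.1)).congr_deriv (sub_self _)) intervalIntegrable_const
  rw [intervalIntegral.integral_zero] at h
  exact sub_eq_sub_iff_sub_eq_sub.mpr (sub_eq_zero.mp h.symm)

section OddPolylog

open Set

/-- The odd power series `∑ₙ cₙ x ^ (2n+1) / (2n+1) ^ k`: the odd analogue of the polylogarithm of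
order `k`, with coefficients `c`. -/
noncomputable def oddPolylog (c : ℕ → ℝ) (k : ℕ) (x : ℝ) : ℝ :=
  ∑' n : ℕ, c n * x ^ (2 * n + 1) / (2 * n + 1) ^ k

variable {c : ℕ → ℝ} {k : ℕ} {r x : ℝ}

@[simp]
theorem oddPolylog_zero : oddPolylog c k 0 = 0 := by
  simp [oddPolylog]

theorem summable_mul_pow_div_pow (h : Summable fun n ↦ c n * x ^ (2 * n)) (k : ℕ) :
    Summable fun n ↦ c n * x ^ (2 * n) / (2 * n + 1) ^ k := by
  refine h.abs.of_norm_bounded fun n ↦ ?_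
  have hn : (1 : ℝ) ≤ (2 * n + 1) ^ k := one_le_pow₀ (by linarith [n.cast_nonneg (α := ℝ)])
  rw [norm_div, Real.norm_eq_abs, Real.norm_of_nonneg (by positivity)]
  exact div_le_self (abs_nonneg _) hn

theorem hasDerivAt_oddPolylog_succ (hc : ∀ y, |y| < r → Summable fun n ↦ c n * y ^ (2 * n))
    (k : ℕ) (hx : |x| < r) :
    HasDerivAt (oddPolylog c (k + 1)) (∑' n : ℕ, c n * x ^ (2 * n) / (2 * n + 1) ^ k) x := by
  obtain ⟨ρ, hxρ, hρr⟩ := exists_between hx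
  have hρ : 0 < ρ := (abs_nonneg x).trans_lt hxρ
  refine hasDerivAt_tsum_of_isPreconnected (t := Ioo (-ρ) ρ) (y₀ := 0)
    (g := fun n y ↦ c n * y ^ (2 * n + 1) / (2 * n + 1) ^ (k + 1))
    (g' := fun n y ↦ c n * y ^ (2 * n) / (2 * n + 1) ^ k)
    (summable_mul_pow_div_pow (hc ρ ((abs_of_pos hρ).trans_lt hρr)) k).abs isOpen_Ioo
    isPreconnected_Ioo (fun n y _ ↦ ?_) (fun n y hy ↦ ?_) ⟨neg_lt_zero.mpr hρ, hρ⟩ ?_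
    (abs_lt.mp hxρ)
  · refine (((hasDerivAt_pow (2 * n + 1) y).const_mul (c n)).div_const _).congr_deriv ?_
    push_cast
    field_simp
    ring
  · have hyρ : |y| ≤ |ρ| := (abs_lt.mpr hy).le.trans (le_abs_self ρ)
    simp only [norm_div, norm_mul, norm_pow, abs_div, abs_mul, abs_pow, Real.norm_eq_abs]
    gcongr
  · exact summable_zero.congr fun n ↦ by simp

theorem oddPolylog_eq_mul_tsum :
    oddPolylog c k x = x * ∑' n : ℕ, c n * x ^ (2 * n) / (2 * n + 1) ^ k := by
  rw [oddPolylog, ← tsum_mul_left]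
  exact tsum_congr fun n ↦ by ring

theorem hasDerivAt_oddPolylog_succ_of_ne_zero
    (hc : ∀ y, |y| < r → Summable fun n ↦ c n * y ^ (2 * n)) (hx : |x| < r) (hx₀ : x ≠ 0) :
    HasDerivAt (oddPolylog c (k + 1)) (oddPolylog c k x / x) x := by
  rw [oddPolylog_eq_mul_tsum, mul_div_cancel_left₀ _ hx₀]
  exact hasDerivAt_oddPolylog_succ hc k hx

theorem continuousOn_oddPolylog_Icc (hc : Summable fun n : ℕ ↦ |c n| / (2 * n + 1) ^ k) :
    ContinuousOn (oddPolylog c k) (Icc (-1) 1) := by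
  refine continuousOn_tsum (fun n ↦ by fun_prop) hc fun n x hx ↦ ?_
  rw [norm_div, norm_mul, norm_pow, Real.norm_of_nonneg (by positivity : (0 : ℝ) ≤ (2 * n + 1) ^ k),
    Real.norm_eq_abs, Real.norm_eq_abs]
  gcongr
  exact mul_le_of_le_one_right (abs_nonneg _) (pow_le_one₀ (abs_nonneg x) (abs_le.mpr hx))

end OddPolylog

section InverseTangentIntegral

open Set

/-- The generalized inverse tangent integral `Ti_k`; thus `Ti_1 = arctan` on `(-1, 1)`, `Ti_2` is
the inverse tangent integral `∫₀ˣ arctan t / t dt`, and `Ti_2(1)` is Catalan's constant. -/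
noncomputable def inverseTangentIntegral (k : ℕ) : ℝ → ℝ :=
  oddPolylog (fun n ↦ (-1) ^ n) k

variable {x : ℝ}

theorem inverseTangentIntegral_one (hx : |x| < 1) : inverseTangentIntegral 1 x = Real.arctan x := by
  rw [← (Real.hasSum_arctan hx).tsum_eq, inverseTangentIntegral, oddPolylog]
  exact tsum_congr fun n ↦ by push_cast; rw [pow_one]

theorem inverseTangentIntegral_apply_one (k : ℕ) :
    inverseTangentIntegral k 1 = ∑' n : ℕ, (-1 : ℝ) ^ n / (2 * n + 1) ^ k := by
  simp [inverseTangentIntegral, oddPolylog]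

theorem hasDerivAt_inverseTangentIntegral_two (hx : |x| < 1) (hx₀ : x ≠ 0) :
    HasDerivAt (inverseTangentIntegral 2) (Real.arctan x / x) x := by
  rw [← inverseTangentIntegral_one hx]
  refine hasDerivAt_oddPolylog_succ_of_ne_zero (r := 1) (fun y hy ↦ ?_) hx hx₀
  refine (summable_geometric_of_abs_lt_one (r := -y ^ 2) ?_).congr fun n ↦ ?_
  · simpa [abs_neg] using hy
  · rw [neg_pow, pow_mul]

theorem continuousOn_inverseTangentIntegral_two :
    ContinuousOn (inverseTangentIntegral 2) (Icc (-1) 1) := by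
  refine continuousOn_oddPolylog_Icc ?_
  simp only [abs_pow, abs_neg, abs_one, one_pow]
  have h := (Real.summable_one_div_nat_pow.mpr one_lt_two).comp_injective
    (i := fun n : ℕ ↦ 2 * n + 1) fun m n h ↦ by simpa using h
  simpa [Function.comp_def] using h

theorem continuousAt_inverseTangentIntegral_two (hx : |x| < 1) :
    ContinuousAt (inverseTangentIntegral 2) x :=
  continuousOn_inverseTangentIntegral_two.continuousAt
    (Icc_mem_nhds (abs_lt.mp hx).1 (abs_lt.mp hx).2)

end InverseTangentIntegral

section Arcsin

open Set

/-- The coefficients of `arcsin x / √(1 - x²) = ∑ₙ cₙ x ^ (2n+1) / (2n+1)`. -/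
noncomputable def arcsinCoeff (n : ℕ) : ℝ := 4 ^ n / n.centralBinom

variable {x : ℝ}

theorem arcsinCoeff_succ (n : ℕ) :
    arcsinCoeff (n + 1) = arcsinCoeff n + arcsinCoeff n / (2 * n + 1) := by
  have h : ((n : ℝ) + 1) * (n + 1).centralBinom = 2 * (2 * n + 1) * n.centralBinom :=
    mod_cast Nat.succ_mul_centralBinom_succ n
  have h₀ : (n.centralBinom : ℝ) ≠ 0 := mod_cast n.centralBinom_ne_zero
  have h₁ : ((n + 1).centralBinom : ℝ) ≠ 0 := mod_cast (n + 1).centralBinom_ne_zero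
  rw [arcsinCoeff, arcsinCoeff]
  field_simp
  linear_combination (-2 * 4 ^ n) * h

theorem arcsinCoeff_isBigO : arcsinCoeff =O[Filter.atTop] fun n ↦ ((n ^ 1 : ℕ) : ℝ) := by
  refine Asymptotics.IsBigO.of_bound 2 ?_
  filter_upwards [Filter.eventually_gt_atTop 0] with n hn
  have h₀ : (0 : ℝ) < n.centralBinom := mod_cast n.centralBinom_pos
  rw [arcsinCoeff, Real.norm_of_nonneg (by positivity), Real.norm_of_nonneg (by positivity),
    div_le_iff₀ h₀]
  exact_mod_cast (n.four_pow_le_two_mul_self_mul_centralBinom hn).trans_eq (by ring)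

theorem summable_arcsinCoeff_mul_pow (hx : |x| < 1) :
    Summable fun n ↦ arcsinCoeff n * x ^ (2 * n) := by
  have hx2 : ‖x ^ 2‖ < 1 := by simpa using hx
  simpa only [pow_mul] using
    (summable_norm_mul_geometric_of_norm_lt_one' hx2 arcsinCoeff_isBigO).of_norm

theorem one_sub_sq_mul_tsum_arcsinCoeff (hx : |x| < 1) :
    (1 - x ^ 2) * ∑' n, arcsinCoeff n * x ^ (2 * n) = 1 + x * oddPolylog arcsinCoeff 1 x := by
  have h₀ := summable_arcsinCoeff_mul_pow hx
  have h₁ := summable_mul_pow_div_pow h₀ 1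
  have hrec : ∑' n, arcsinCoeff n * x ^ (2 * n) = 1 + (x ^ 2 * ∑' n, arcsinCoeff n * x ^ (2 * n) +
      x ^ 2 * ∑' n : ℕ, arcsinCoeff n * x ^ (2 * n) / (2 * n + 1) ^ 1) := by
    rw [← tsum_mul_left, ← tsum_mul_left, ← (h₀.mul_left _).tsum_add (h₁.mul_left _),
      h₀.tsum_eq_zero_add]
    congr 1
    · simp [arcsinCoeff]
    · exact tsum_congr fun n ↦ by rw [arcsinCoeff_succ]; ring
  rw [oddPolylog_eq_mul_tsum]
  linear_combination hrec

theorem hasDerivAt_oddPolylog_arcsinCoeff_one_mul_sqrt (hx : |x| < 1) :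
    HasDerivAt (fun y ↦ oddPolylog arcsinCoeff 1 y * √(1 - y ^ 2)) (1 / √(1 - x ^ 2)) x := by
  have hpos := one_sub_sq_pos hx
  have hsqrt : √(1 - x ^ 2) ≠ 0 := (Real.sqrt_pos.mpr hpos).ne'
  refine ((hasDerivAt_oddPolylog_succ (fun _ ↦ summable_arcsinCoeff_mul_pow) 0 hx).mul
    (((hasDerivAt_pow 2 x).const_sub 1).sqrt hpos.ne')).congr_deriv ?_
  simp only [zero_add, pow_zero, div_one]
  field_simp
  rw [Real.sq_sqrt hpos.le]
  linear_combination 2 * one_sub_sq_mul_tsum_arcsinCoeff hx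

theorem oddPolylog_arcsinCoeff_one (hx : |x| < 1) :
    oddPolylog arcsinCoeff 1 x = Real.arcsin x / √(1 - x ^ 2) := by
  have hsub : uIcc 0 x ⊆ Ioo (-1) 1 := ordConnected_Ioo.uIcc_subset (by simp) (abs_lt.mp hx)
  have hderiv : ∀ y ∈ uIcc 0 x,
      HasDerivAt (fun y ↦ oddPolylog arcsinCoeff 1 y * √(1 - y ^ 2)) (1 / √(1 - y ^ 2)) y :=
    fun y hy ↦ hasDerivAt_oddPolylog_arcsinCoeff_one_mul_sqrt (abs_lt.mpr (hsub hy))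
  have h := sub_eq_sub_of_hasDerivAt_eq (fun y hy ↦ (hderiv y hy).continuousAt.continuousWithinAt)
    Real.continuous_arcsin.continuousOn (fun y hy ↦ hderiv y (uIoo_subset_uIcc_self hy))
    fun y hy ↦ by
      have hy' := hsub (uIoo_subset_uIcc_self hy)
      exact Real.hasDerivAt_arcsin hy'.1.ne' hy'.2.ne
  rw [eq_div_iff (Real.sqrt_pos.mpr (one_sub_sq_pos hx)).ne']
  simpa using h

theorem one_sub_two_mul_div_one_add_sq_sq (x : ℝ) :
    1 - (2 * x / (1 + x ^ 2)) ^ 2 = ((1 - x ^ 2) / (1 + x ^ 2)) ^ 2 := by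
  have h : 1 + x ^ 2 ≠ 0 := by positivity
  field_simp
  ring

theorem arcsin_two_mul_div_one_add_sq (hx : |x| ≤ 1) :
    Real.arcsin (2 * x / (1 + x ^ 2)) = 2 * Real.arctan x := by
  refine Real.arcsin_eq_of_sin_eq ?_ ?_
  · have h : √(1 + x ^ 2) ^ 2 = 1 + x ^ 2 := Real.sq_sqrt (by positivity)
    rw [Real.sin_two_mul, Real.sin_arctan, Real.cos_arctan]
    field_simp
    rw [h]
  · have h₁ := Real.arctan_mono (abs_le.mp hx).1
    have h₂ := Real.arctan_mono (abs_le.mp hx).2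
    rw [Real.arctan_neg, Real.arctan_one] at h₁
    rw [Real.arctan_one] at h₂
    constructor <;> linarith

theorem abs_two_mul_div_one_add_sq_lt_one (hx : |x| < 1) : |2 * x / (1 + x ^ 2)| < 1 := by
  have h := one_sub_sq_pos hx
  rw [← sq_lt_one_iff_abs_lt_one, ← sub_pos, one_sub_two_mul_div_one_add_sq_sq]
  positivity

theorem oddPolylog_arcsinCoeff_one_two_mul_div_one_add_sq (hx : |x| < 1) :
    oddPolylog arcsinCoeff 1 (2 * x / (1 + x ^ 2)) =
      2 * Real.arctan x * (1 + x ^ 2) / (1 - x ^ 2) := by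
  have h := one_sub_sq_pos hx
  rw [oddPolylog_arcsinCoeff_one (abs_two_mul_div_one_add_sq_lt_one hx),
    arcsin_two_mul_div_one_add_sq hx.le, one_sub_two_mul_div_one_add_sq_sq,
    Real.sqrt_sq (by positivity), div_div_eq_mul_div]

theorem hasDerivAt_two_mul_div_one_add_sq (x : ℝ) :
    HasDerivAt (fun x : ℝ ↦ 2 * x / (1 + x ^ 2)) (2 * (1 - x ^ 2) / (1 + x ^ 2) ^ 2) x := by
  refine (((hasDerivAt_id' x).const_mul 2).div ((hasDerivAt_pow 2 x).const_add 1)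
    (by positivity)).congr_deriv ?_
  push_cast
  ring

theorem oddPolylog_arcsinCoeff_two_two_mul_div_one_add_sq (hx : |x| < 1) :
    oddPolylog arcsinCoeff 2 (2 * x / (1 + x ^ 2)) = 2 * inverseTangentIntegral 2 x := by
  have hlt : ∀ {y}, y ∈ uIcc 0 x → |y| < 1 := fun hy ↦
    (by simpa using abs_sub_left_of_mem_uIcc hy : |_| ≤ |x|).trans_lt hx
  have hne : ∀ {y}, y ∈ uIoo 0 x → y ≠ 0 := by
    rintro y hy rfl
    exact left_notMem_uIoo hy
  have h := sub_eq_sub_of_hasDerivAt_eq (a := 0) (b := x)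
    (f := fun y ↦ oddPolylog arcsinCoeff 2 (2 * y / (1 + y ^ 2)))
    (g := fun y ↦ 2 * inverseTangentIntegral 2 y)
    (f' := fun y ↦ 2 * (Real.arctan y / y)) ?_ ?_ ?_ ?_
  · simpa [inverseTangentIntegral] using h
  · intro y hy
    exact ((hasDerivAt_oddPolylog_succ (fun _ ↦ summable_arcsinCoeff_mul_pow) 1
      (abs_two_mul_div_one_add_sq_lt_one (hlt hy))).comp y
        (hasDerivAt_two_mul_div_one_add_sq y)).continuousAt.continuousWithinAt
  · exact fun y hy ↦
      ((continuousAt_inverseTangentIntegral_two (hlt hy)).const_mul 2).continuousWithinAt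
  · intro y hy
    have hy₀ := hne hy
    have hy₁ := hlt (uIoo_subset_uIcc_self hy)
    have hy₂ : 1 - y ^ 2 ≠ 0 := (one_sub_sq_pos hy₁).ne'
    refine ((hasDerivAt_oddPolylog_succ_of_ne_zero (fun _ ↦ summable_arcsinCoeff_mul_pow)
      (abs_two_mul_div_one_add_sq_lt_one hy₁) (by positivity)).comp y
        (hasDerivAt_two_mul_div_one_add_sq y)).congr_deriv ?_
    rw [oddPolylog_arcsinCoeff_one_two_mul_div_one_add_sq hy₁]
    field_simp
  · exact fun y hy ↦ (hasDerivAt_inverseTangentIntegral_two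
      (hlt (uIoo_subset_uIcc_self hy)) (hne hy)).const_mul 2

end Arcsin

section DoublePolylog

open Set

variable {x y : ℂ} {r : ℝ}

/-- The index set of `Li11`, parametrized by `(a, b) ↦ (m, n) = (a + b + 2, a + 1)`. -/
def strictPairEquiv : ℕ × ℕ ≃ {p : ℕ × ℕ // p.2 < p.1 ∧ 1 ≤ p.2} where
  toFun q := ⟨(q.1 + q.2 + 2, q.1 + 1), by lia⟩
  invFun p := (p.1.2 - 1, p.1.1 - p.1.2 - 1)
  left_inv q := by
    ext
    · simp
    · simp only
      lia
  right_inv := fun ⟨⟨m, n⟩, h⟩ ↦ by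
    simp only [Subtype.mk.injEq, Prod.mk.injEq] at h ⊢
    lia

theorem Li11_eq_tsum_prod (x y : ℂ) :
    Li11 x y = ∑' p : ℕ × ℕ, x ^ (p.1 + p.2 + 2) * y ^ (p.1 + 1) /
      ((p.1 + p.2 + 2) * (p.1 + 1)) := by
  rw [Li11, ← strictPairEquiv.tsum_eq]
  exact tsum_congr fun p ↦ by simp [strictPairEquiv]

@[simp]
theorem Li11_zero_left (y : ℂ) : Li11 0 y = 0 := by
  simp [Li11_eq_tsum_prod]

theorem hasSum_neg_log_one_sub_mul_inv (hx : ‖x‖ < 1) (hy : ‖y‖ ≤ 1) :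
    HasSum (fun p : ℕ × ℕ ↦ (x * y) ^ (p.1 + 1) / (p.1 + 1) * x ^ p.2)
      (-Complex.log (1 - x * y) * (1 - x)⁻¹) := by
  have hxy : ‖x * y‖ < 1 := by
    rw [norm_mul]; exact mul_lt_one_of_nonneg_of_lt_one_left (norm_nonneg x) hx hy
  have hlog : HasSum (fun n : ℕ ↦ (x * y) ^ (n + 1) / (n + 1)) (-Complex.log (1 - x * y)) := by
    simpa using (hasSum_nat_add_iff' 1).mpr (Complex.hasSum_taylorSeries_neg_log hxy)
  have hgeom := hasSum_geometric_of_norm_lt_one hx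
  have h := summable_mul_of_summable_norm hlog.summable.norm hgeom.summable.norm
  exact hlog.mul hgeom h

theorem hasDerivAt_Li11 (hx : ‖x‖ < 1) (hy : ‖y‖ ≤ 1) :
    HasDerivAt (Li11 · y) (-Complex.log (1 - x * y) * (1 - x)⁻¹) x := by
  obtain ⟨ρ, hxρ, hρ₁⟩ := exists_between hx
  have hρ : 0 < ρ := (norm_nonneg x).trans_lt hxρ
  have hgeom := summable_geometric_of_lt_one hρ.le hρ₁
  rw [← (hasSum_neg_log_one_sub_mul_inv hx hy).tsum_eq, funext (Li11_eq_tsum_prod · y)]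
  refine hasDerivAt_tsum_of_isPreconnected (t := Metric.ball 0 ρ) (y₀ := 0)
    (g := fun p z ↦ z ^ (p.1 + p.2 + 2) * y ^ (p.1 + 1) / ((p.1 + p.2 + 2) * (p.1 + 1)))
    (g' := fun p z ↦ (z * y) ^ (p.1 + 1) / (p.1 + 1) * z ^ p.2)
    (hgeom.mul_of_nonneg hgeom (fun _ ↦ by positivity) (fun _ ↦ by positivity))
    Metric.isOpen_ball (convex_ball 0 ρ).isPreconnected (fun p z _ ↦ ?_) (fun p z hz ↦ ?_)
    (Metric.mem_ball_self hρ) (summable_zero.congr fun p ↦ by simp) (mem_ball_zero_iff.mpr hxρ)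
  · have h₁ : (p.1 + p.2 + 2 : ℂ) ≠ 0 := by norm_cast
    have h₂ : (p.1 + 1 : ℂ) ≠ 0 := by norm_cast
    refine (((hasDerivAt_pow (p.1 + p.2 + 2) z).mul_const _).div_const _).congr_deriv ?_
    push_cast
    field_simp
    ring
  · have hzρ : ‖z‖ ≤ ρ := (mem_ball_zero_iff.mp hz).le
    have hzy : ‖z * y‖ ≤ ρ := by
      rw [norm_mul]; exact (mul_le_of_le_one_right (norm_nonneg z) hy).trans hzρ
    have hp : (1 : ℝ) ≤ ‖(p.1 + 1 : ℂ)‖ := by norm_cast; simp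
    rw [norm_mul, norm_div, norm_pow, norm_pow]
    gcongr
    calc ‖z * y‖ ^ (p.1 + 1) / ‖(p.1 + 1 : ℂ)‖ ≤ ‖z * y‖ ^ (p.1 + 1) :=
          div_le_self (by positivity) hp
      _ ≤ ρ ^ (p.1 + 1) := by gcongr
      _ ≤ ρ ^ p.1 := pow_le_pow_of_le_one hρ.le hρ₁.le (Nat.le_succ _)

theorem log_one_add_mul_I_im (r : ℝ) : (Complex.log (1 + r * I)).im = Real.arctan r := by
  have h : |Complex.arg (1 + r * I)| < π / 2 := abs_arg_lt_pi_div_two_iff.mpr (.inl (by simp))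
  rw [log_im]
  exact (Real.arctan_eq_of_tan_eq (by simp [tan_arg]) (abs_lt.mp h)).symm

theorem hasDerivAt_im_Li11_sub (hr : |r| < 1) :
    HasDerivAt (fun s : ℝ ↦ (Li11 (-s : ℝ) I - Li11 s (-I)).im)
      (2 * Real.arctan r / (1 - r ^ 2)) r := by
  have hr' : ‖(r : ℂ)‖ < 1 := by simpa using hr
  have h₁ : HasDerivAt (fun z : ℂ ↦ Li11 (-z) I) (Complex.log (1 + r * I) * (1 + r)⁻¹) r := by
    simpa [Function.comp_def] using
      (hasDerivAt_Li11 (x := -r) (y := I) (by simpa using hr) (by simp)).comp (r : ℂ)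
        (hasDerivAt_neg (r : ℂ))
  have h₂ : HasDerivAt (fun z : ℂ ↦ Li11 z (-I)) (-Complex.log (1 + r * I) * (1 - r)⁻¹) r := by
    simpa using hasDerivAt_Li11 hr' (y := -I) (by simp)
  have h := imCLM.hasFDerivAt.comp_hasDerivAt r (h₁.sub h₂).comp_ofReal
  have hfactor : Complex.log (1 + r * I) * (1 + r)⁻¹ - -Complex.log (1 + r * I) * (1 - r)⁻¹ =
      Complex.log (1 + r * I) * ((1 + r)⁻¹ + (1 - r)⁻¹ : ℝ) := by
    push_cast
    ring
  rw [hfactor, imCLM_apply, im_mul_ofReal, log_one_add_mul_I_im] at h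
  refine (h.congr_deriv ?_).congr_of_eventuallyEq (.of_forall fun s ↦ by simp)
  have hp : 1 + r ≠ 0 := by linarith [(abs_lt.mp hr).1]
  have hm : 1 - r ≠ 0 := by linarith [(abs_lt.mp hr).2]
  rw [show 1 - r ^ 2 = (1 + r) * (1 - r) by ring]
  field_simp
  ring

theorem arctan_one_sub_div_one_add (hr : -1 < r) :
    Real.arctan ((1 - r) / (1 + r)) = π / 4 - Real.arctan r := by
  have hr' : 0 < 1 + r := by linarith
  have h : Real.arctan r + Real.arctan ((1 - r) / (1 + r)) = Real.arctan 1 := by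
    have hden : 1 - r * ((1 - r) / (1 + r)) = (1 + r ^ 2) / (1 + r) := by
      field_simp
      ring
    rw [Real.arctan_add (sub_pos.mp (by rw [hden]; positivity)), hden]
    congr 1
    field_simp
    ring
  rw [Real.arctan_one] at h
  linarith

theorem abs_one_sub_div_one_add_lt_one (hr : 0 < r) : |(1 - r) / (1 + r)| < 1 := by
  have hr' : 0 < 1 + r := by linarith
  rw [abs_div, abs_of_pos hr', div_lt_one hr', abs_lt]
  constructor <;> linarith

theorem continuousOn_inverseTangentIntegral_two_one_sub_div_one_add :
    ContinuousOn (fun s : ℝ ↦ inverseTangentIntegral 2 ((1 - s) / (1 + s))) (Ici 0) := by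
  have hpos : ∀ {s : ℝ}, s ∈ Ici 0 → 0 < 1 + s := fun hs ↦ by linarith [mem_Ici.mp hs]
  refine continuousOn_inverseTangentIntegral_two.comp
    (.div (by fun_prop) (by fun_prop) fun s hs ↦ (hpos hs).ne') fun s hs ↦ ?_
  rw [mem_Icc, le_div_iff₀ (hpos hs), div_le_one (hpos hs)]
  constructor <;> linarith [mem_Ici.mp hs]

theorem hasDerivAt_one_sub_div_one_add (hr : 1 + r ≠ 0) :
    HasDerivAt (fun s : ℝ ↦ (1 - s) / (1 + s)) (-2 / (1 + r) ^ 2) r := by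
  refine (((hasDerivAt_id' r).const_sub 1).div ((hasDerivAt_id' r).const_add 1) hr).congr_deriv ?_
  ring

theorem hasDerivAt_log_one_sub_div_one_add (hr : |r| < 1) :
    HasDerivAt (fun s ↦ Real.log ((1 - s) / (1 + s))) (-2 / (1 - r ^ 2)) r := by
  have hp : 0 < 1 + r := by linarith [(abs_lt.mp hr).1]
  have hm : 0 < 1 - r := by linarith [(abs_lt.mp hr).2]
  refine ((hasDerivAt_one_sub_div_one_add hp.ne').log (by positivity)).congr_deriv ?_
  rw [show 1 - r ^ 2 = (1 + r) * (1 - r) by ring]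
  field_simp

theorem hasDerivAt_inverseTangentIntegral_two_sub_log (hr₀ : 0 < r) (hr₁ : r < 1) :
    HasDerivAt
      (fun s ↦ inverseTangentIntegral 2 ((1 - s) / (1 + s)) - π / 4 * Real.log ((1 - s) / (1 + s)))
      (2 * Real.arctan r / (1 - r ^ 2)) r := by
  have hp : 0 < 1 + r := by linarith
  have hm : 0 < 1 - r := by linarith
  have hTi := (hasDerivAt_inverseTangentIntegral_two (abs_one_sub_div_one_add_lt_one hr₀)
    (by positivity)).comp r (hasDerivAt_one_sub_div_one_add hp.ne')
  have hlog := hasDerivAt_log_one_sub_div_one_add (abs_lt.mpr ⟨by linarith, hr₁⟩)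
  refine (hTi.sub (hlog.const_mul (π / 4))).congr_deriv ?_
  rw [arctan_one_sub_div_one_add (by linarith), show 1 - r ^ 2 = (1 + r) * (1 - r) by ring]
  field_simp
  ring

theorem im_Li11_sub (hr₀ : 0 ≤ r) (hr₁ : r < 1) :
    (Li11 (-r : ℝ) I - Li11 r (-I)).im =
      inverseTangentIntegral 2 ((1 - r) / (1 + r)) - inverseTangentIntegral 2 1 -
        π / 4 * Real.log ((1 - r) / (1 + r)) := by
  have habs : ∀ {s}, s ∈ Icc 0 r → |s| < 1 := fun hs ↦
    abs_lt.mpr ⟨by linarith [hs.1], by linarith [hs.2]⟩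
  have h := sub_eq_sub_of_hasDerivAt_eq (a := 0) (b := r)
    (f := fun s : ℝ ↦ (Li11 (-s : ℝ) I - Li11 s (-I)).im)
    (g := fun s ↦ inverseTangentIntegral 2 ((1 - s) / (1 + s)) -
      π / 4 * Real.log ((1 - s) / (1 + s)))
    (f' := fun s ↦ 2 * Real.arctan s / (1 - s ^ 2)) ?_ ?_ ?_ ?_
  · simp only [neg_zero, ofReal_zero, Li11_zero_left, sub_zero, zero_im, add_zero, div_one,
      Real.log_one, mul_zero] at h
    linear_combination h
  all_goals simp only [uIcc_of_le hr₀, uIoo_of_le hr₀]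
  · exact fun s hs ↦ (hasDerivAt_im_Li11_sub (habs hs)).continuousAt.continuousWithinAt
  · exact (continuousOn_inverseTangentIntegral_two_one_sub_div_one_add.mono fun s hs ↦ hs.1).sub
      (.mul continuousOn_const fun s hs ↦
        (hasDerivAt_log_one_sub_div_one_add (habs hs)).continuousAt.continuousWithinAt)
  · exact fun s hs ↦ hasDerivAt_im_Li11_sub (habs (Ioo_subset_Icc_self hs))
  · exact fun s hs ↦ hasDerivAt_inverseTangentIntegral_two_sub_log hs.1 (hs.2.trans hr₁)

end DoublePolylog

theorem arcsinCoeff_mul_pow_div (x : ℝ) (n : ℕ) :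
    arcsinCoeff n * x ^ (2 * n) / (2 * n + 1) ^ 2 =
      (2 * x) ^ (2 * n) / ((Nat.choose (2 * n) n : ℝ) * (2 * n + 1) ^ 2) := by
  rw [arcsinCoeff, Nat.centralBinom_eq_two_mul_choose, mul_pow, pow_mul 2, div_mul_eq_mul_div,
    div_div]
  norm_num

theorem stmt10_general {r : ℝ} (hr₀ : 0 < r) (hr₁ : r < 1) :
    (1 - r ^ 2) / (1 + r ^ 2) * (∑' n : ℕ, (2 * ((1 - r ^ 2) / (1 + r ^ 2))) ^ (2 * n) /
        ((Nat.choose (2 * n) n : ℝ) * (2 * n + 1) ^ 2)) =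
      2 * (Li11 ((-r : ℝ) : ℂ) I - Li11 r (-I)).im - π / 2 * Real.log ((1 + r) / (1 - r)) +
        2 * ∑' k : ℕ, (-1 : ℝ) ^ k / (2 * k + 1) ^ 2 := by
  have hx : (1 - r ^ 2) / (1 + r ^ 2) =
      2 * ((1 - r) / (1 + r)) / (1 + ((1 - r) / (1 + r)) ^ 2) := by
    field_simp
    ring
  rw [← tsum_congr (arcsinCoeff_mul_pow_div _), ← oddPolylog_eq_mul_tsum, hx,
    oddPolylog_arcsinCoeff_two_two_mul_div_one_add_sq (abs_one_sub_div_one_add_lt_one hr₀),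
    im_Li11_sub hr₀.le hr₁, ← inverseTangentIntegral_apply_one, ← inv_div (1 - r), Real.log_inv]
  ring

theorem one_add_div_one_sub_one_div_sqrt_three : (1 + 1 / √3) / (1 - 1 / √3) = 2 + √3 := by
  have h₁ : √3 - 1 ≠ 0 := (sub_pos.mpr (Real.lt_sqrt_of_sq_lt (by norm_num))).ne'
  field_simp
  linear_combination -Real.sq_sqrt (zero_le_three (α := ℝ))

/-- `∑_{n≥0} 1/(binom(2n,n)(2n+1)²)
  = 4 Im(Li_{1,1}(−1/√3, i) − Li_{1,1}(1/√3, −i)) − π log(2+√3) + 4G`. -/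
theorem stmt10 :
    (∑' n : ℕ, 1 / ((Nat.choose (2 * n) n : ℝ) * (2 * (n : ℝ) + 1) ^ 2)) =
    4 * (Li11 ((-1 / Real.sqrt 3 : ℝ) : ℂ) Complex.I -
         Li11 ((1 / Real.sqrt 3 : ℝ) : ℂ) (-Complex.I)).im -
      π * Real.log (2 + Real.sqrt 3) +
      4 * ∑' k : ℕ, (-1 : ℝ) ^ k / (2 * (k : ℝ) + 1) ^ 2 := by
  have hr : 1 / √3 < 1 := (div_lt_one (by positivity)).mpr (Real.lt_sqrt_of_sq_lt (by norm_num))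
  have hx : (1 - (1 / √3) ^ 2) / (1 + (1 / √3) ^ 2) = (1 / 2 : ℝ) := by norm_num
  have h := stmt10_general (by positivity) hr
  rw [one_add_div_one_sub_one_div_sqrt_three, hx, mul_one_div_cancel two_ne_zero] at h
  simp only [one_pow, ← neg_div] at h
  linear_combination 2 * h
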